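/- If G is a connected graph with exactly three vertices, or a star-shaped graph (a graph with one center vertex adjacent to every other vertex and no edges between the non-center vertices), then lim_{δ→0+} α_c^1(δ) = ∞; for every other finite connected graph G with |V|≥3, lim_{δ→0+} α_c^1(δ) < ∞. -/

import Mathlib

open scoped BigOperators Classical ENNReal
open Filter Topology

noncomputable section
namespace ORRW

/-- Probability measures on a finite type `A`, topologized as a subset of `ℝ^A`. -/
abbrev ProbMeas (A : Type) [Fintype A] : Type :=
  {p : A → ℝ // (∀ a, 0 ≤ p a) ∧ ∑ a, p a = 1}

/-- Relative entropy `R(γ‖ρ)` between two finitely supported "rows", valued in `EReal`,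
with `+∞` when absolute continuity fails. -/
def relEnt {A : Type} [Fintype A] (γ ρ : A → ℝ) : EReal :=
  if ∀ a, ρ a = 0 → γ a = 0 then ((∑ a, γ a * Real.log (γ a / ρ a) : ℝ) : EReal)
  else (⊤ : EReal)

/-- `∫ R(q‖p) dν = Σ_a ν(a) · R(q(a,·)‖p(a,·))`. -/
def relEntInt {A : Type} [Fintype A] (ν : A → ℝ) (q p : A → A → ℝ) : EReal :=
  ∑ a, (ν a : EReal) * relEnt (q a) (p a)

/-- `ν` is an invariant measure of the kernel `q`. -/
def Invariant {A : Type} [Fintype A] (ν : A → ℝ) (q : A → A → ℝ) : Prop :=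
  ∀ y, ∑ x, ν x * q x y = ν y

/-- Extended-real logarithm: `⊥` at nonpositive arguments. -/
def elog (x : ℝ) : EReal := if x ≤ 0 then (⊥ : EReal) else ((Real.log x : ℝ) : EReal)

/-- Empirical measure of a finite trajectory `f : Fin (n+1) → A`. -/
def empMeas {A : Type} [Fintype A] [DecidableEq A] (n : ℕ) (f : Fin (n + 1) → A) :
    ProbMeas A :=
  ⟨fun a => ((Finset.univ.filter (fun i => f i = a)).card : ℝ) / (n + 1),
    fun a => by positivity, by
      have key : ∑ a : A, ((Finset.univ.filter (fun i => f i = a)).card) = n + 1 := by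
        have h := Finset.card_eq_sum_card_fiberwise
          (s := (Finset.univ : Finset (Fin (n + 1)))) (t := (Finset.univ : Finset A))
          (f := f) (fun i _ => Finset.mem_univ (f i))
        simpa using h.symm
      have key' : ∑ a : A, (((Finset.univ.filter (fun i => f i = a)).card : ℝ)) = (n : ℝ) + 1 := by
        have h2 := congrArg (fun m : ℕ => (m : ℝ)) key
        push_cast at h2
        simpa using h2
      rw [← Finset.sum_div, key', div_self (by positivity)]⟩

section Graph

variable {V : Type} [Fintype V] [DecidableEq V]

/-- Weight of an edge given the set `F` of already traversed edges. -/
def gw (δ : ℝ) (F : Finset (Sym2 V)) (e : Sym2 V) : ℝ := if e ∈ F then δ else 1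

/-- The transition kernel `p̂_F` on `V`. -/
def phat (G : SimpleGraph V) [DecidableRel G.Adj] (δ : ℝ) (F : Finset (Sym2 V))
    (x y : V) : ℝ :=
  if G.Adj x y then gw δ F s(x, y) / ∑ z ∈ G.neighborFinset x, gw δ F s(x, z) else 0

/-- Two edges are adjacent iff they share a vertex. -/
def edgeAdj (e e' : Sym2 V) : Prop := ∃ v, v ∈ e ∧ v ∈ e'

/-- `x` is a vertex of the edge set `F`. -/
def memVerts (F : Finset (Sym2 V)) (x : V) : Prop := ∃ e ∈ F, x ∈ e

/-- `𝒯_G`: stochastic matrices on `V` adapted to `G`. -/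
def TG (G : SimpleGraph V) : Set (V → V → ℝ) :=
  {q | (∀ x y, 0 ≤ q x y) ∧ (∀ x, ∑ y, q x y = 1) ∧ ∀ x y, q x y ≠ 0 → G.Adj x y}

/-- `𝒯(F)`: stochastic kernels from the vertex set of `F` to `V`, supported on `F`. -/
def TE (F : Finset (Sym2 V)) : Set (V → V → ℝ) :=
  {q | (∀ x y, 0 ≤ q x y) ∧ (∀ x, memVerts F x → ∑ y, q x y = 1) ∧
    ∀ x y, q x y ≠ 0 → s(x, y) ∈ F}

/-- `ℰ`: admissible increasing sequences of traversed edge sets. -/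
def seqE (G : SimpleGraph V) [DecidableRel G.Adj] (v₁ : V) :
    Set (Fin G.edgeFinset.card → Finset (Sym2 V)) :=
  {Es | (∀ k, Es k ⊆ G.edgeFinset) ∧ (∀ k, (Es k).card = (k : ℕ) + 1) ∧
    (∀ k l : Fin G.edgeFinset.card, (k : ℕ) + 1 = (l : ℕ) → Es k ⊂ Es l) ∧
    (∀ k : Fin G.edgeFinset.card, (k : ℕ) = 0 → ∃ e ∈ Es k, v₁ ∈ e) ∧
    (∀ k l : Fin G.edgeFinset.card, (k : ℕ) + 1 = (l : ℕ) →
      ∀ e ∈ Es l \ Es k, ∃ e' ∈ Es k, edgeAdj e e')}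

/-- The rate function `I_δ`. -/
def Ifun (G : SimpleGraph V) [DecidableRel G.Adj] (v₁ : V) (δ : ℝ) (ν : ProbMeas V) : EReal :=
  sInf { c : EReal |
    ∃ (νs : Fin G.edgeFinset.card → ProbMeas V) (r : Fin G.edgeFinset.card → ℝ)
      (Es : Fin G.edgeFinset.card → Finset (Sym2 V))
      (qs : Fin G.edgeFinset.card → V → V → ℝ),
      Es ∈ seqE G v₁ ∧ (∀ k, 0 ≤ r k) ∧ (∑ k, r k = 1) ∧
      (∀ k x, (νs k).1 x ≠ 0 → memVerts (Es k) x) ∧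
      (∀ x, ∑ k, r k * (νs k).1 x = ν.1 x) ∧
      (∀ k, qs k ∈ TE (Es k)) ∧ (∀ k, Invariant (νs k).1 (qs k)) ∧
      c = ∑ k, ((r k : ℝ) : EReal) * relEntInt (νs k).1 (qs k) (phat G δ (Es k)) }

/-- Edges traversed along a path, given as a list of consecutively visited vertices. -/
def pathEdges : List V → Finset (Sym2 V)
  | [] => ∅
  | [_] => ∅
  | x :: y :: t => insert s(x, y) (pathEdges (y :: t))

/-- Product of one-step ORRW transition probabilities along a trajectory,
the trajectory being listed in reverse chronological order. -/
def stepsProb (G : SimpleGraph V) [DecidableRel G.Adj] (δ : ℝ) : List V → ℝ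
  | [] => 1
  | [_] => 1
  | y :: x :: t => phat G δ (pathEdges (x :: t).reverse) x y * stepsProb G δ (x :: t)

/-- The law of `(X_0, …, X_n)` for the `δ`-ORRW started at `v₁`. -/
def trajProb (G : SimpleGraph V) [DecidableRel G.Adj] (δ : ℝ) (v₁ : V) (n : ℕ)
    (f : Fin (n + 1) → V) : ℝ :=
  if f 0 = v₁ then stepsProb G δ (List.ofFn f).reverse else 0

/-- `P_{v₁}(L_{n+1} ∈ C)`: the probability that the empirical measure of the first
`n+1` positions of the `δ`-ORRW lies in `C`. -/
def probEmp (G : SimpleGraph V) [DecidableRel G.Adj] (δ : ℝ) (v₁ : V) (n : ℕ)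
    (C : Set (ProbMeas V)) : ℝ :=
  ∑ f : Fin (n + 1) → V, if empMeas n f ∈ C then trajProb G δ v₁ n f else 0

/-- The family `𝒮` of edge sets of connected subgraphs having an edge at `v₁`. -/
def scrS (G : SimpleGraph V) [DecidableRel G.Adj] (v₁ : V) : Set (Finset (Sym2 V)) :=
  {F | F ⊆ G.edgeFinset ∧ (∃ e ∈ F, v₁ ∈ e) ∧
    ∀ x y : V, memVerts F x → memVerts F y →
      (SimpleGraph.fromEdgeSet (↑F : Set (Sym2 V))).Reachable x y}

/-- `𝒮₀` is a decreasing subset of `𝒮`. -/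
def DecreasingIn (G : SimpleGraph V) [DecidableRel G.Adj] (v₁ : V)
    (S0 : Set (Finset (Sym2 V))) : Prop :=
  ∀ F₁ F₂, F₁ ∈ scrS G v₁ → F₂ ∈ scrS G v₁ → F₁ ⊆ F₂ → F₂ ∈ S0 → F₁ ∈ S0

/-- `P_{v₁}(T_{𝒮₀} > n)`. -/
def probTgt (G : SimpleGraph V) [DecidableRel G.Adj] (δ : ℝ) (v₁ : V)
    (S0 : Set (Finset (Sym2 V))) (n : ℕ) : ℝ :=
  ∑ f : Fin (n + 1) → V,
    if ∀ k, 1 ≤ k → k ≤ n → pathEdges ((List.ofFn f).take (k + 1)) ∈ S0 then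
      trajProb G δ v₁ n f
    else 0

/-- `P_{v₁}(C_E > n)` for the edge cover time `C_E`. -/
def probCgt (G : SimpleGraph V) [DecidableRel G.Adj] (δ : ℝ) (v₁ : V) (n : ℕ) : ℝ :=
  ∑ f : Fin (n + 1) → V,
    if ¬ G.edgeFinset ⊆ pathEdges (List.ofFn f) then trajProb G δ v₁ n f else 0

/-- `E_{v₁}[exp (α T_{𝒮₀})]`, valued in `ℝ≥0∞`; the stopping time takes values in
`{1, 2, …} ∪ {∞}`. -/
def expT (G : SimpleGraph V) [DecidableRel G.Adj] (δ : ℝ) (v₁ : V)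
    (S0 : Set (Finset (Sym2 V))) (α : ℝ) : ℝ≥0∞ :=
  (∑' n : ℕ, ENNReal.ofReal
      (Real.exp (α * (n + 1)) * (probTgt G δ v₁ S0 n - probTgt G δ v₁ S0 (n + 1)))) +
    (if 0 < α then (⊤ : ℝ≥0∞) else if α = 0 then 1 else 0) *
      ENNReal.ofReal (⨅ n : ℕ, probTgt G δ v₁ S0 n)

/-- `E_{v₁}[exp (α C_E)]`, valued in `ℝ≥0∞`. -/
def expC (G : SimpleGraph V) [DecidableRel G.Adj] (δ : ℝ) (v₁ : V) (α : ℝ) : ℝ≥0∞ :=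
  (∑' n : ℕ, ENNReal.ofReal
      (Real.exp (α * (n + 1)) * (probCgt G δ v₁ n - probCgt G δ v₁ (n + 1)))) +
    (if 0 < α then (⊤ : ℝ≥0∞) else if α = 0 then 1 else 0) *
      ENNReal.ofReal (⨅ n : ℕ, probCgt G δ v₁ n)

/-- The critical exponent `α_c(δ)` attached to a family `𝒮₀` of edge sets. -/
def alphaC (G : SimpleGraph V) [DecidableRel G.Adj] (δ : ℝ)
    (S0 : Set (Finset (Sym2 V))) : EReal :=
  sInf { c : EReal | ∃ (ν : ProbMeas V) (F : Finset (Sym2 V)) (q : V → V → ℝ),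
    F ∈ S0 ∧ q ∈ TE F ∧ (∀ x, ν.1 x ≠ 0 → memVerts F x) ∧ Invariant ν.1 q ∧
    c = relEntInt ν.1 q (phat G δ F) }

/-- `α_c^1(δ)`: the critical exponent for the cover time. -/
def alphaC1 (G : SimpleGraph V) [DecidableRel G.Adj] (v₁ : V) (δ : ℝ) : EReal :=
  alphaC G δ (scrS G v₁ \ {G.edgeFinset})

end Graph

section Lifted

variable {V : Type} [Fintype V] [LinearOrder V]

/-- Smaller endpoint of an unordered pair. -/
def sym2lo (e : Sym2 V) : V := Sym2.lift ⟨fun a b => min a b, fun a b => min_comm a b⟩ e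

/-- Larger endpoint of an unordered pair. -/
def sym2hi (e : Sym2 V) : V := Sym2.lift ⟨fun a b => max a b, fun a b => max_comm a b⟩ e

/-- `V_S = E × {-1, 1}`: vertex set of the lifted directed graph `S`
(`true` plays the role of `+1`). -/
abbrev VSet (G : SimpleGraph V) [DecidableRel G.Adj] : Type :=
  {e : Sym2 V // e ∈ G.edgeFinset} × Bool

/-- Tail `z⁻` of an oriented edge. -/
def zm (G : SimpleGraph V) [DecidableRel G.Adj] (z : VSet G) : V :=
  if z.2 then sym2lo z.1.1 else sym2hi z.1.1

/-- Head `z⁺` of an oriented edge. -/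
def zp (G : SimpleGraph V) [DecidableRel G.Adj] (z : VSet G) : V :=
  if z.2 then sym2hi z.1.1 else sym2lo z.1.1

/-- The kernel `p_F` on the lifted directed graph `S`. -/
def pS (G : SimpleGraph V) [DecidableRel G.Adj] (δ : ℝ) (F : Finset (Sym2 V))
    (z₁ z₂ : VSet G) : ℝ :=
  if zp G z₁ = zm G z₂ then
    gw δ F z₂.1.1 / ∑ w : VSet G, (if zp G z₁ = zm G w then gw δ F w.1.1 else 0)
  else 0

/-- `𝒯_S`: stochastic matrices on `V_S` moving along orientations. -/
def TS (G : SimpleGraph V) [DecidableRel G.Adj] : Set (VSet G → VSet G → ℝ) :=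
  {q | (∀ z w, 0 ≤ q z w) ∧ (∀ z, ∑ w, q z w = 1) ∧ ∀ z w, q z w ≠ 0 → zp G z = zm G w}

/-- `𝒞(𝒮₀)`: probability measures on `V_S` whose first marginal is supported in
some member of `𝒮₀`. -/
def CC (G : SimpleGraph V) [DecidableRel G.Adj] (S0 : Set (Finset (Sym2 V))) :
    Set (ProbMeas (VSet G)) :=
  {μ | ∃ F ∈ S0, ∀ z : VSet G, μ.1 z ≠ 0 → z.1.1 ∈ F}

/-- `Λ_{δ,𝒮₀}`. -/
def Lam (G : SimpleGraph V) [DecidableRel G.Adj] (v₁ : V) (δ : ℝ)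
    (S0 : Set (Finset (Sym2 V))) (μ : ProbMeas (VSet G)) : EReal :=
  sInf { c : EReal |
    ∃ (μs : Fin G.edgeFinset.card → ProbMeas (VSet G)) (r : Fin G.edgeFinset.card → ℝ)
      (Es : Fin G.edgeFinset.card → Finset (Sym2 V))
      (qs : Fin G.edgeFinset.card → VSet G → VSet G → ℝ),
      Es ∈ seqE G v₁ ∧ (∀ k, 0 ≤ r k) ∧ (∀ k, Es k ∉ S0 → r k = 0) ∧ (∑ k, r k = 1) ∧
      (∀ k z, (μs k).1 z ≠ 0 → z.1.1 ∈ Es k) ∧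
      (∀ z, ∑ k, r k * (μs k).1 z = μ.1 z) ∧
      (∀ k, qs k ∈ TS G) ∧ (∀ k, Invariant (μs k).1 (qs k)) ∧
      c = ∑ k, ((r k : ℝ) : EReal) * relEntInt (μs k).1 (qs k) (pS G δ (Es k)) }

/-- `Λ^z_{δ,𝒮₀}`. -/
def LamZ (G : SimpleGraph V) [DecidableRel G.Adj] (v₁ : V) (δ : ℝ)
    (S0 : Set (Finset (Sym2 V))) (z : VSet G) (μ : ProbMeas (VSet G)) : EReal :=
  sInf { c : EReal |
    ∃ (μs : Fin G.edgeFinset.card → ProbMeas (VSet G)) (r : Fin G.edgeFinset.card → ℝ)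
      (Es : Fin G.edgeFinset.card → Finset (Sym2 V))
      (qs : Fin G.edgeFinset.card → VSet G → VSet G → ℝ),
      Es ∈ seqE G v₁ ∧ (∀ k : Fin G.edgeFinset.card, (k : ℕ) = 0 → Es k = {z.1.1}) ∧
      (∀ k, 0 ≤ r k) ∧ (∀ k, Es k ∉ S0 → r k = 0) ∧ (∑ k, r k = 1) ∧
      (∀ k w, (μs k).1 w ≠ 0 → w.1.1 ∈ Es k) ∧
      (∀ w, ∑ k, r k * (μs k).1 w = μ.1 w) ∧
      (∀ k, qs k ∈ TS G) ∧ (∀ k, Invariant (μs k).1 (qs k)) ∧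
      c = ∑ k, ((r k : ℝ) : EReal) * relEntInt (μs k).1 (qs k) (pS G δ (Es k)) }

/-- `Λ₁`: the Donsker–Varadhan functional for the simple random walk on `S`
(whose kernel is `pS` with `δ = 1`). -/
def Lam1 (G : SimpleGraph V) [DecidableRel G.Adj] (μ : ProbMeas (VSet G)) : EReal :=
  sInf { c : EReal | ∃ q ∈ TS G, Invariant μ.1 q ∧ c = relEntInt μ.1 q (pS G 1 ∅) }

/-- Boundary `∂F` of an edge set: edges of `F` adjacent to some edge outside `F`. -/
def bdry (G : SimpleGraph V) [DecidableRel G.Adj] (F : Finset (Sym2 V)) : Finset (Sym2 V) :=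
  F.filter fun e => ∃ e' ∈ G.edgeFinset \ F, edgeAdj e e'

/-- Out-degree `d(z)` of `z` in `S`. -/
def outDeg (G : SimpleGraph V) [DecidableRel G.Adj] (z : VSet G) : ℕ :=
  (Finset.univ.filter (fun w : VSet G => zp G z = zm G w)).card

/-- Number `k(z)` of out-neighbours of `z` lying in `F × {-1, 1}`. -/
def outDegIn (G : SimpleGraph V) [DecidableRel G.Adj] (F : Finset (Sym2 V))
    (z : VSet G) : ℕ :=
  (Finset.univ.filter (fun w : VSet G => zp G z = zm G w ∧ w.1.1 ∈ F)).card

/-- The law of `(Z_0, …, Z_n)` for the lifted `δ`-ORRW conditioned on `Z_0 = z`. -/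
def liftTraj (G : SimpleGraph V) [DecidableRel G.Adj] (δ : ℝ) (z : VSet G) (n : ℕ)
    (g : Fin (n + 1) → VSet G) : ℝ :=
  if g 0 = z then
    ∏ i : Fin n,
      pS G δ ((Finset.Iic i.castSucc).image (fun j => (g j).1.1))
        (g i.castSucc) (g i.succ)
  else 0

/-- The restricted logarithmic Laplace functional `W^{n+1}_{𝒮₀}(z)`. -/
def Wres (G : SimpleGraph V) [DecidableRel G.Adj] (δ : ℝ) (z : VSet G)
    (S0 : Set (Finset (Sym2 V))) (h : ProbMeas (VSet G) → ℝ) (n : ℕ) : EReal :=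
  if 0 < ∑ g : Fin (n + 1) → VSet G,
      (if empMeas n g ∈ CC G S0 then liftTraj G δ z n g else 0) then
    ((-((((n : ℝ) + 1))⁻¹ * Real.log (∑ g : Fin (n + 1) → VSet G,
      if empMeas n g ∈ CC G S0 then
        Real.exp (-((n : ℝ) + 1) * h (empMeas n g)) * liftTraj G δ z n g
      else 0)) : ℝ) : EReal)
  else (⊤ : EReal)

end Lifted

section Aux

variable {V : Type} [Fintype V] [DecidableEq V]

/-- Real-valued row cost. -/
def rowc (G : SimpleGraph V) [DecidableRel G.Adj] (δ : ℝ) (F : Finset (Sym2 V))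
    (q : V → V → ℝ) (x : V) : ℝ :=
  ∑ y, q x y * Real.log (q x y / phat G δ F x y)

lemma gw_pos {δ : ℝ} (hδ : 0 < δ) (F : Finset (Sym2 V)) (e : Sym2 V) : 0 < gw δ F e := by
  unfold gw; split_ifs <;> linarith

lemma den_pos (G : SimpleGraph V) [DecidableRel G.Adj] {δ : ℝ} (hδ : 0 < δ)
    (F : Finset (Sym2 V)) {x y : V} (h : G.Adj x y) :
    0 < ∑ z ∈ G.neighborFinset x, gw δ F s(x, z) :=
  Finset.sum_pos (fun z _ => gw_pos hδ F _) ⟨y, by simpa using h⟩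

lemma phat_pos (G : SimpleGraph V) [DecidableRel G.Adj] {δ : ℝ} (hδ : 0 < δ)
    (F : Finset (Sym2 V)) {x y : V} (h : G.Adj x y) : 0 < phat G δ F x y := by
  unfold phat
  rw [if_pos h]
  exact div_pos (gw_pos hδ F _) (den_pos G hδ F h)

lemma phat_sum_le (G : SimpleGraph V) [DecidableRel G.Adj] (δ : ℝ)
    (F : Finset (Sym2 V)) (x : V) : ∑ y, phat G δ F x y ≤ 1 := by
  unfold phat
  rw [← Finset.sum_filter, ← SimpleGraph.neighborFinset_eq_filter, ← Finset.sum_div]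
  exact div_self_le_one _

lemma phat_mono (G : SimpleGraph V) [DecidableRel G.Adj] {δ δ' : ℝ} (hδ : 0 < δ) (h : δ ≤ δ')
    (F : Finset (Sym2 V)) {x y : V} (hxy : G.Adj x y) (hF : s(x, y) ∈ F) :
    phat G δ F x y ≤ phat G δ' F x y := by
  have hδ' : 0 < δ' := hδ.trans_le h
  unfold phat
  rw [if_pos hxy, if_pos hxy, div_le_div_iff₀ (den_pos G hδ F hxy) (den_pos G hδ' F hxy)]
  rw [Finset.mul_sum, Finset.mul_sum]
  apply Finset.sum_le_sum
  intro z _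
  simp only [gw, if_pos hF]
  split_ifs <;> nlinarith

lemma relEntInt_eq (G : SimpleGraph V) [DecidableRel G.Adj] {δ : ℝ} (hδ : 0 < δ)
    {F : Finset (Sym2 V)} (hF : F ⊆ G.edgeFinset) (ν : V → ℝ) {q : V → V → ℝ} (hq : q ∈ TE F) :
    relEntInt ν q (phat G δ F) = ((∑ x, ν x * rowc G δ F q x : ℝ) : EReal) := by
  have key : ∀ s : Finset V, ((∑ x ∈ s, ν x * rowc G δ F q x : ℝ) : EReal)
      = ∑ x ∈ s, (ν x : EReal) * (rowc G δ F q x : EReal) := by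
    intro s
    induction s using Finset.induction_on with
    | empty => simp
    | insert a s ha ih =>
      rw [Finset.sum_insert ha, Finset.sum_insert ha, EReal.coe_add, EReal.coe_mul, ih]
  rw [key]
  unfold relEntInt
  apply Finset.sum_congr rfl
  intro x _
  congr 1
  unfold relEnt
  rw [if_pos]
  · rfl
  · intro y hy
    by_contra hne
    have h1 := hF (hq.2.2 x y hne)
    have h2 : G.Adj x y := by simpa using h1
    exact (phat_pos G hδ F h2).ne' hy

lemma adj_of_q {G : SimpleGraph V} [DecidableRel G.Adj]
    {F : Finset (Sym2 V)} (hF : F ⊆ G.edgeFinset) {q : V → V → ℝ} (hq : q ∈ TE F) {x y : V}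
    (h : q x y ≠ 0) : G.Adj x y := by
  have h1 := hF (hq.2.2 x y h)
  simpa using h1

lemma rowc_nonneg (G : SimpleGraph V) [DecidableRel G.Adj] {δ : ℝ} (hδ : 0 < δ)
    {F : Finset (Sym2 V)} (hF : F ⊆ G.edgeFinset) {q : V → V → ℝ} (hq : q ∈ TE F) {x : V}
    (hx : memVerts F x) : 0 ≤ rowc G δ F q x := by
  have h1 : ∑ y, (q x y - phat G δ F x y) ≤ rowc G δ F q x := by
    apply Finset.sum_le_sum
    intro y _
    by_cases h0 : q x y = 0
    · rw [h0]
      simp only [zero_sub, zero_div, zero_mul, Left.neg_nonpos_iff]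
      by_cases h : G.Adj x y
      · exact (phat_pos G hδ F h).le
      · simp [phat, h]
    · have hadj := adj_of_q hF hq h0
      have hp := phat_pos G hδ F hadj
      have hq0 : 0 < q x y := lt_of_le_of_ne (hq.1 x y) (Ne.symm h0)
      have := Real.one_sub_inv_le_log_of_pos (div_pos hq0 hp)
      have h2 := mul_le_mul_of_nonneg_left this hq0.le
      refine le_trans (le_of_eq ?_) h2
      field_simp
  rw [Finset.sum_sub_distrib, hq.2.1 x hx] at h1
  linarith [phat_sum_le G δ F x]

lemma rowc_anti (G : SimpleGraph V) [DecidableRel G.Adj] {δ δ' : ℝ} (hδ : 0 < δ) (h : δ ≤ δ')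
    {F : Finset (Sym2 V)} (hF : F ⊆ G.edgeFinset) {q : V → V → ℝ} (hq : q ∈ TE F) (x : V) :
    rowc G δ' F q x ≤ rowc G δ F q x := by
  apply Finset.sum_le_sum
  intro y _
  by_cases h0 : q x y = 0
  · simp [h0]
  · have hadj := adj_of_q hF hq h0
    have hp := phat_pos G hδ F hadj
    have hp' := phat_pos G (hδ.trans_le h) F hadj
    have hq0 : 0 < q x y := lt_of_le_of_ne (hq.1 x y) (Ne.symm h0)
    apply mul_le_mul_of_nonneg_left _ hq0.le
    apply Real.log_le_log (div_pos hq0 hp')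
    exact div_le_div_of_nonneg_left hq0.le hp (phat_mono G hδ h F hadj (hq.2.2 x y h0))

lemma rowc_bdry (G : SimpleGraph V) [DecidableRel G.Adj] {δ : ℝ} (hδ : 0 < δ)
    {F : Finset (Sym2 V)} (hF : F ⊆ G.edgeFinset) {q : V → V → ℝ} (hq : q ∈ TE F) {x z : V}
    (hx : memVerts F x) (hz : G.Adj x z) (hzF : s(x, z) ∉ F) :
    -(Fintype.card V : ℝ) - Real.log δ ≤ rowc G δ F q x := by
  have hD : 1 ≤ ∑ z ∈ G.neighborFinset x, gw δ F s(x, z) := by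
    have h1 : gw δ F s(x, z) = 1 := by simp [gw, hzF]
    rw [← h1]
    exact Finset.single_le_sum (f := fun z => gw δ F s(x, z))
      (fun z _ => (gw_pos hδ F _).le) (by simpa using hz)
  have h1 : ∑ y, (-1 - q x y * Real.log δ) ≤ rowc G δ F q x := by
    apply Finset.sum_le_sum
    intro y _
    by_cases h0 : q x y = 0
    · rw [h0]; simp
    · have hadj := adj_of_q hF hq h0
      have hp := phat_pos G hδ F hadj
      have hq0 : 0 < q x y := lt_of_le_of_ne (hq.1 x y) (Ne.symm h0)
      have hple : phat G δ F x y ≤ δ := by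
        unfold phat
        rw [if_pos hadj]
        have : gw δ F s(x, y) = δ := by simp [gw, hq.2.2 x y h0]
        rw [this]
        exact div_le_self hδ.le hD
      have hl := Real.log_le_log hp hple
      have hlq := Real.one_sub_inv_le_log_of_pos hq0
      rw [Real.log_div hq0.ne' hp.ne']
      have h2 := mul_le_mul_of_nonneg_left hlq hq0.le
      have h3 := mul_le_mul_of_nonneg_left hl hq0.le
      have h4 : q x y * (1 - (q x y)⁻¹) = q x y - 1 := by field_simp
      rw [mul_sub]
      linarith
  rw [Finset.sum_sub_distrib, ← Finset.sum_mul, hq.2.1 x hx] at h1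
  simpa using h1

/-- Lower bound when every adjacent pair meets every edge. -/
lemma cost_lower (G : SimpleGraph V) [DecidableRel G.Adj] {δ : ℝ} (hδ : 0 < δ)
    (hcov : ∀ a b u v : V, G.Adj a b → G.Adj u v → u = a ∨ u = b ∨ v = a ∨ v = b)
    {F : Finset (Sym2 V)} (hF : F ⊆ G.edgeFinset) (hne : F ≠ G.edgeFinset)
    {q : V → V → ℝ} (hq : q ∈ TE F) (ν : ProbMeas V) (hν : ∀ x, ν.1 x ≠ 0 → memVerts F x)
    (hinv : Invariant ν.1 q) (hpos : 0 ≤ -(Fintype.card V : ℝ) - Real.log δ) :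
    (-(Fintype.card V : ℝ) - Real.log δ) / 2 ≤ ∑ x, ν.1 x * rowc G δ F q x := by
  set B : V → Prop := fun x => ∃ z, G.Adj x z ∧ s(x, z) ∉ F with hB
  set K := -(Fintype.card V : ℝ) - Real.log δ with hK
  have hindep : ∀ a b, G.Adj a b → ¬ B a → ¬ B b → False := by
    intro a b hab ha hb
    apply hne
    apply Finset.Subset.antisymm hF
    intro e he
    induction e using Sym2.ind with
    | _ u v =>
      have huv : G.Adj u v := by simpa using he
      simp only [hB, not_exists, not_and, not_not] at ha hb
      rcases hcov a b u v hab huv with h | h | h | h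
      · subst h; exact ha v huv
      · subst h; exact hb v huv
      · subst h; rw [Sym2.eq_swap]; exact ha u huv.symm
      · subst h; rw [Sym2.eq_swap]; exact hb u huv.symm
  have hsplit : ∑ x, (if B x then ν.1 x else 0) + ∑ x, (if B x then 0 else ν.1 x) = 1 := by
    rw [← Finset.sum_add_distrib]
    refine Eq.trans ?_ ν.2.2
    apply Finset.sum_congr rfl
    intro x _
    split_ifs <;> simp
  have hW : ∑ y, (if B y then 0 else ν.1 y) ≤ ∑ x, (if B x then ν.1 x else 0) := by
    have e1 : ∑ y, (if B y then 0 else ν.1 y)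
        = ∑ x, ν.1 x * ∑ y, (if B y then 0 else q x y) := by
      simp_rw [Finset.mul_sum]
      rw [Finset.sum_comm]
      apply Finset.sum_congr rfl
      intro y _
      by_cases h : B y
      · simp [h]
      · simp [h, hinv y]
    rw [e1]
    apply Finset.sum_le_sum
    intro x _
    by_cases h0 : ν.1 x = 0
    · simp [h0]
    have hnn := ν.2.1 x
    by_cases h : B x
    · rw [if_pos h]
      have : ∑ y, (if B y then 0 else q x y) ≤ 1 := by
        rw [← hq.2.1 x (hν x h0)]
        apply Finset.sum_le_sum
        intro y _
        split_ifs
        · exact hq.1 x y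
        · exact le_rfl
      nlinarith
    · rw [if_neg h]
      have : ∑ y, (if B y then 0 else q x y) = 0 := by
        apply Finset.sum_eq_zero
        intro y _
        split_ifs with hy
        · rfl
        · by_contra hc
          exact hindep x y (adj_of_q hF hq hc) h hy
      rw [this]; simp
  have hfin : ∑ x, (if B x then ν.1 x else 0) * K ≤ ∑ x, ν.1 x * rowc G δ F q x := by
    apply Finset.sum_le_sum
    intro x _
    by_cases h0 : ν.1 x = 0
    · simp [h0]
    have hnn := ν.2.1 x
    have hr := rowc_nonneg G hδ hF hq (hν x h0)
    by_cases h : B x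
    · rw [if_pos h]
      obtain ⟨z, hz, hzF⟩ := h
      exact mul_le_mul_of_nonneg_left (rowc_bdry G hδ hF hq (hν x h0) hz hzF) hnn
    · rw [if_neg h, zero_mul]
      positivity
  rw [← Finset.sum_mul] at hfin
  nlinarith

lemma alphaC1_nonneg (G : SimpleGraph V) [DecidableRel G.Adj] (v₁ : V) {δ : ℝ} (hδ : 0 < δ) :
    0 ≤ alphaC1 G v₁ δ := by
  unfold alphaC1 alphaC
  apply le_sInf
  rintro c ⟨ν, F, q, hF, hq, hν, hinv, rfl⟩
  have hFE : F ⊆ G.edgeFinset := hF.1.1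
  rw [relEntInt_eq G hδ hFE _ hq]
  norm_cast
  apply Finset.sum_nonneg
  intro x _
  by_cases h0 : ν.1 x = 0
  · simp [h0]
  exact mul_nonneg (ν.2.1 x) (rowc_nonneg G hδ hFE hq (hν x h0))

lemma alphaC1_anti (G : SimpleGraph V) [DecidableRel G.Adj] (v₁ : V) :
    AntitoneOn (fun d : ℝ => alphaC1 G v₁ d) (Set.Ioi 0) := by
  intro δ hδ δ' hδ' h
  have hδ : 0 < δ := hδ
  have hδ' : 0 < δ' := hδ'
  show alphaC1 G v₁ δ' ≤ alphaC1 G v₁ δ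
  unfold alphaC1 alphaC
  apply le_sInf
  rintro c ⟨ν, F, q, hF, hq, hν, hinv, rfl⟩
  have hFE : F ⊆ G.edgeFinset := hF.1.1
  refine sInf_le_of_le ⟨ν, F, q, hF, hq, hν, hinv, rfl⟩ ?_
  rw [relEntInt_eq G hδ hFE _ hq, relEntInt_eq G hδ' hFE _ hq]
  rw [EReal.coe_le_coe_iff]
  apply Finset.sum_le_sum
  intro x _
  exact mul_le_mul_of_nonneg_left (rowc_anti G hδ h hFE hq x) (ν.2.1 x)

lemma part_one (G : SimpleGraph V) [DecidableRel G.Adj] (v₁ : V)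
    (hcov : ∀ a b u v : V, G.Adj a b → G.Adj u v → u = a ∨ u = b ∨ v = a ∨ v = b) :
    Tendsto (fun d : ℝ => alphaC1 G v₁ d) (nhdsWithin 0 (Set.Ioi 0)) (nhds (⊤ : EReal)) := by
  rw [EReal.tendsto_nhds_top_iff_real]
  intro M
  have h1 : ∀ᶠ d in nhdsWithin (0:ℝ) (Set.Ioi 0),
      Real.log d < -(Fintype.card V : ℝ) - 2 * |M| - 1 :=
    Real.tendsto_log_nhdsGT_zero.eventually (eventually_lt_atBot _)
  filter_upwards [h1, self_mem_nhdsWithin] with d hd hd0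
  have hd0 : 0 < d := hd0
  have hM := le_abs_self M
  have hM0 := abs_nonneg M
  have : ((M : ℝ) : EReal) < (((-(Fintype.card V : ℝ) - Real.log d) / 2 : ℝ) : EReal) := by
    rw [EReal.coe_lt_coe_iff]; linarith
  refine this.trans_le ?_
  unfold alphaC1 alphaC
  apply le_sInf
  rintro c ⟨ν, F, q, hF, hq, hν, hinv, rfl⟩
  have hFE : F ⊆ G.edgeFinset := hF.1.1
  rw [relEntInt_eq G hd0 hFE _ hq, EReal.coe_le_coe_iff]
  exact cost_lower G hd0 hcov hFE hF.2 hq ν hν hinv (by linarith)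

lemma upper (G : SimpleGraph V) [DecidableRel G.Adj] (v₁ : V) {F : Finset (Sym2 V)}
    (hF : F ∈ scrS G v₁) (hne : F ≠ G.edgeFinset) {a b : V} (hab : G.Adj a b)
    (ha : ∀ z, G.Adj a z → s(a, z) ∈ F) (hb : ∀ z, G.Adj b z → s(b, z) ∈ F)
    {δ : ℝ} (hδ : 0 < δ) :
    alphaC1 G v₁ δ ≤ ((Real.log (G.degree a) / 2 + Real.log (G.degree b) / 2 : ℝ) : EReal) := by
  have hnab : a ≠ b := hab.ne
  obtain ⟨φ, hφ, hφa, hφb⟩ : ∃ φ : V → V, (∀ x, memVerts F x → s(x, φ x) ∈ F) ∧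
      φ a = b ∧ φ b = a := by
    have : ∀ x, ∃ y, memVerts F x → s(x, y) ∈ F := by
      intro x
      by_cases h : memVerts F x
      · obtain ⟨e, he, hx⟩ := h
        obtain ⟨y, rfl⟩ := Sym2.mem_iff_exists.mp hx
        exact ⟨y, fun _ => he⟩
      · exact ⟨x, fun h' => absurd h' h⟩
    choose ψ hψ using this
    refine ⟨fun x => if x = a then b else if x = b then a else ψ x, ?_, ?_, ?_⟩
    · intro x hx
      dsimp only
      split_ifs with h1 h2
      · subst h1; exact ha _ hab
      · subst h2; exact hb _ hab.symm
      · exact hψ x hx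
    · simp
    · simp [hnab.symm]
  let q : V → V → ℝ := fun x y => if s(x, φ x) ∈ F ∧ y = φ x then 1 else 0
  have hq : q ∈ TE F := by
    refine ⟨?_, ?_, ?_⟩
    · intro x y; simp only [q]; split_ifs <;> norm_num
    · intro x hx; simp [q, hφ x hx]
    · intro x y h
      simp only [q, ne_eq, ite_eq_right_iff, one_ne_zero, imp_false, not_not] at h
      rw [h.2]; exact h.1
  let ν : V → ℝ := fun x => (if x = a then 1/2 else 0) + (if x = b then 1/2 else 0)
  have hν : (∀ x, 0 ≤ ν x) ∧ ∑ x, ν x = 1 := by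
    refine ⟨?_, ?_⟩
    · intro x; simp only [ν]; positivity
    · simp only [ν, Finset.sum_add_distrib, Finset.sum_ite_eq', Finset.mem_univ, if_true]
      norm_num
  have hsum : ∀ f : V → ℝ, ∑ x, ν x * f x = f a / 2 + f b / 2 := by
    intro f
    simp only [ν, add_mul, Finset.sum_add_distrib, ite_mul, zero_mul, Finset.sum_ite_eq',
      Finset.mem_univ, if_true]
    ring
  have hφaF : s(a, φ a) ∈ F := by rw [hφa]; exact ha _ hab
  have hφbF : s(b, φ b) ∈ F := by rw [hφb]; exact hb _ hab.symm
  have hrow : ∀ x, (∀ z, G.Adj x z → s(x, z) ∈ F) → s(x, φ x) ∈ F → G.Adj x (φ x) →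
      rowc G δ F q x = Real.log (G.degree x) := by
    intro x hx hxF hxa
    unfold rowc
    rw [Finset.sum_eq_single (φ x)]
    · have hp : phat G δ F x (φ x) = 1 / (G.degree x : ℝ) := by
        unfold phat
        rw [if_pos hxa]
        have : ∑ z ∈ G.neighborFinset x, gw δ F s(x, z) = ∑ z ∈ G.neighborFinset x, δ := by
          apply Finset.sum_congr rfl
          intro z hz
          have := hx z (by simpa using hz)
          simp [gw, this]
        rw [this, Finset.sum_const, SimpleGraph.card_neighborFinset_eq_degree, nsmul_eq_mul]
        have hg : gw δ F s(x, φ x) = δ := by simp [gw, hxF]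
        have hd : (G.degree x : ℝ) ≠ 0 := by
          have : 0 < G.degree x := (G.degree_pos_iff_exists_adj x).mpr ⟨_, hxa⟩
          positivity
        rw [hg]; field_simp
      rw [hp]
      simp [q, hxF]
    · intro y _ hy
      simp [q, hy]
    · simp
  unfold alphaC1 alphaC
  refine sInf_le_of_le ⟨⟨ν, hν⟩, F, q, ⟨hF, hne⟩, hq, ?_, ?_, rfl⟩ ?_
  · intro x hx
    have : x = a ∨ x = b := by
      by_contra hc
      push Not at hc
      apply hx
      simp [ν, hc.1, hc.2]
    rcases this with rfl | rfl
    · exact ⟨_, hφaF, by simp⟩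
    · exact ⟨_, hφbF, by simp⟩
  · intro y
    show ∑ x, ν x * q x y = ν y
    rw [hsum (fun x => q x y)]
    simp only [q, ν, hφaF, hφbF, true_and]
    rw [hφa, hφb]
    split_ifs <;> norm_num
  · rw [relEntInt_eq G hδ hF.1 _ hq, EReal.coe_le_coe_iff]
    show ∑ x, ν x * rowc G δ F q x ≤ _
    rw [hsum, hrow a ha hφaF (by rw [hφa]; exact hab), hrow b hb hφbF (by rw [hφb]; exact hab.symm)]

lemma exists_F (G : SimpleGraph V) [DecidableRel G.Adj] (hG : G.Connected)
    (hV : 3 ≤ Fintype.card V) (v₁ : V) :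
    ∃ w : V, w ≠ v₁ ∧ (∃ c d, G.Adj c d ∧ c ≠ w ∧ d ≠ w) ∧
      ∀ u, G.Adj w u → G.edgeFinset.erase s(w, u) ∈ scrS G v₁ := by
  obtain ⟨w, -, hw⟩ := Finset.exists_max_image (Finset.univ : Finset V) (fun x => G.dist v₁ x)
    ⟨v₁, Finset.mem_univ _⟩
  have hmax : ∀ x, G.dist v₁ x ≤ G.dist v₁ w := fun x => hw x (Finset.mem_univ _)
  have hcard : 1 < Fintype.card V := by omega
  have hw1 : w ≠ v₁ := by
    rintro rfl
    obtain ⟨x, hx⟩ := Fintype.exists_ne_of_one_lt_card hcard w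
    have h1 := hmax x
    have := hG.pos_dist_of_ne hx.symm
    rw [SimpleGraph.dist_self] at h1
    omega
  -- predecessor
  have hpred : ∀ x, x ≠ v₁ → ∃ y, G.Adj x y ∧ G.dist v₁ y < G.dist v₁ x := by
    intro x hx
    obtain ⟨p, hp⟩ := hG.exists_walk_length_eq_dist x v₁
    cases p with
    | nil => exact absurd rfl hx
    | @cons _ y _ h p =>
      refine ⟨y, h, ?_⟩
      have := SimpleGraph.dist_le p
      rw [SimpleGraph.Walk.length_cons] at hp
      rw [SimpleGraph.dist_comm, SimpleGraph.dist_comm (u := v₁)]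
      omega
  obtain ⟨x0, hx0w, hx0v⟩ : ∃ x, x ≠ w ∧ x ≠ v₁ := by
    by_contra hc
    push Not at hc
    have : (Finset.univ : Finset V) ⊆ {w, v₁} := by
      intro x _
      by_cases h : x = w
      · simp [h]
      · simp [hc x h]
    have h2 := Finset.card_le_card this
    have h3 := Finset.card_le_two (a := w) (b := v₁)
    rw [Finset.card_univ] at h2
    omega
  refine ⟨w, hw1, ?_, ?_⟩
  · obtain ⟨y, hy, hd⟩ := hpred x0 hx0v
    refine ⟨x0, y, hy, hx0w, ?_⟩
    rintro rfl
    exact absurd (hmax x0) (by omega)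
  · intro u hu
    set F := G.edgeFinset.erase s(w, u) with hFdef
    have hmem : ∀ x y, G.Adj x y → x ≠ w → y ≠ w → s(x, y) ∈ F := by
      intro x y hxy hx hy
      rw [hFdef, Finset.mem_erase]
      refine ⟨?_, by simpa using hxy⟩
      intro h
      rw [Sym2.eq_iff] at h
      rcases h with h | h
      · exact hx h.1
      · exact hy h.2
    have hreach : ∀ n x, G.dist v₁ x = n → x ≠ w →
        (SimpleGraph.fromEdgeSet (↑F : Set (Sym2 V))).Reachable x v₁ := by
      intro n
      induction n using Nat.strong_induction_on with
      | _ n ih =>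
        intro x hxn hxw
        by_cases hx : x = v₁
        · rw [hx]
        obtain ⟨y, hy, hd⟩ := hpred x hx
        have hyw : y ≠ w := by
          rintro rfl
          exact absurd (hmax x) (by omega)
        have h1 := ih _ (by omega) y rfl hyw
        refine SimpleGraph.Reachable.trans (SimpleGraph.Adj.reachable ?_) h1
        rw [SimpleGraph.fromEdgeSet_adj]
        exact ⟨by exact_mod_cast hmem x y hy hxw hyw, hy.ne⟩
    have hall : ∀ x, memVerts F x →
        (SimpleGraph.fromEdgeSet (↑F : Set (Sym2 V))).Reachable x v₁ := by
      intro x hx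
      by_cases hxw : x = w
      · obtain ⟨e, he, hxe⟩ := hx
        obtain ⟨y, rfl⟩ := Sym2.mem_iff_exists.mp hxe
        have hadj : G.Adj x y := by
          have := Finset.mem_of_mem_erase he
          simpa using this
        have hyw : y ≠ w := by rw [← hxw]; exact hadj.ne'
        refine SimpleGraph.Reachable.trans (SimpleGraph.Adj.reachable ?_) (hreach _ y rfl hyw)
        rw [SimpleGraph.fromEdgeSet_adj]
        exact ⟨by exact_mod_cast he, hadj.ne⟩
      · exact hreach _ x rfl hxw
    refine ⟨Finset.erase_subset _ _, ?_, fun x y hx hy => (hall x hx).trans (hall y hy).symm⟩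
    obtain ⟨p⟩ := (hreach _ x0 rfl hx0w).symm
    cases p with
    | nil => exact absurd rfl hx0v
    | @cons _ y _ h p =>
      rw [SimpleGraph.fromEdgeSet_adj] at h
      exact ⟨_, by exact_mod_cast h.1, by simp⟩

lemma part_two (G : SimpleGraph V) [DecidableRel G.Adj] (hG : G.Connected)
    (hV : 3 ≤ Fintype.card V) (v₁ : V)
    (hns : ¬ (Fintype.card V = 3 ∨
        (∃ c : V, (∀ v : V, v ≠ c → G.Adj c v) ∧
          ∀ u v : V, G.Adj u v → u = c ∨ v = c))) :
    ∃ L : ℝ, Tendsto (fun d : ℝ => alphaC1 G v₁ d) (nhdsWithin 0 (Set.Ioi 0))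
        (nhds ((L : ℝ) : EReal)) := by
  obtain ⟨w, hw, ⟨c, d, hcd, hcw, hdw⟩, hS⟩ := exists_F G hG hV v₁
  have hdeg : ∀ x : V, ∃ y, G.Adj x y := by
    intro x
    obtain ⟨y, hy⟩ := Fintype.exists_ne_of_one_lt_card (by omega : 1 < Fintype.card V) x
    obtain ⟨p⟩ := hG.preconnected x y
    cases p with
    | nil => exact absurd rfl hy
    | @cons _ z _ h p => exact ⟨z, h⟩
  obtain ⟨u, hu, a, b, hab, h1, h2, h3, h4⟩ : ∃ u, G.Adj w u ∧ ∃ a b, G.Adj a b ∧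
      a ≠ w ∧ b ≠ w ∧ a ≠ u ∧ b ≠ u := by
    by_contra hc
    push Not at hc
    have hc' : ∀ u, G.Adj w u → ∀ a b, G.Adj a b → a ≠ w → b ≠ w → a = u ∨ b = u := by
      intro u hu a b hab ha hb
      by_cases h : a = u
      · exact Or.inl h
      · exact Or.inr (hc u hu a b hab ha hb h)
    obtain ⟨u, hu⟩ := hdeg w
    apply hns
    by_cases hsing : ∀ u', G.Adj w u' → u' = u
    · right
      have hst : ∀ x y : V, G.Adj x y → x = u ∨ y = u := by
        intro x y hxy
        by_cases hx : x = w
        · subst hx; exact Or.inr (hsing y hxy)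
        by_cases hy : y = w
        · subst hy; exact Or.inl (hsing x hxy.symm)
        exact hc' u hu x y hxy hx hy
      refine ⟨u, ?_, hst⟩
      intro v hv
      obtain ⟨y, hy⟩ := hdeg v
      rcases hst v y hy with h | h
      · exact absurd h hv
      · subst h; exact hy.symm
    · left
      push Not at hsing
      obtain ⟨u', hu', hne⟩ := hsing
      have hedge : ∀ x y, G.Adj x y → x ≠ w → y ≠ w → (x = u ∨ x = u') := by
        intro x y hxy hx hy
        have e1 := hc' u hu x y hxy hx hy
        have e2 := hc' u' hu' x y hxy hx hy
        grind
      have hwn : ∀ x, G.Adj w x → x = u ∨ x = u' := by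
        intro x hx
        have e1 := hc' u hu c d hcd hcw hdw
        have e2 := hc' u' hu' c d hcd hcw hdw
        have e3 := hc' x hx c d hcd hcw hdw
        grind
      have : (Finset.univ : Finset V) ⊆ {w, u, u'} := by
        intro x _
        by_cases h : x = w
        · simp [h]
        obtain ⟨y, hy⟩ := hdeg x
        by_cases h' : y = w
        · subst h'
          rcases hwn x hy.symm with h | h <;> simp [h]
        · rcases hedge x y hy h h' with h | h <;> simp [h]
      have h2 := Finset.card_le_card this
      have h3 := Finset.card_le_three (a := w) (b := u) (c := u')
      rw [Finset.card_univ] at h2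
      omega
  have hF := hS u hu
  have hwu : s(w, u) ∈ G.edgeFinset := by simpa using hu
  have hne : G.edgeFinset.erase s(w, u) ≠ G.edgeFinset := by
    intro h
    exact Finset.notMem_erase s(w, u) G.edgeFinset (by rw [h]; exact hwu)
  have hfull : ∀ a, a ≠ w → a ≠ u → ∀ z, G.Adj a z → s(a, z) ∈ G.edgeFinset.erase s(w, u) := by
    intro a ha hau z hz
    rw [Finset.mem_erase]
    refine ⟨?_, by simpa using hz⟩
    intro h
    rw [Sym2.eq_iff] at h
    rcases h with h | h
    · exact ha h.1
    · exact hau h.1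
  have hup : ∀ δ : ℝ, 0 < δ → alphaC1 G v₁ δ ≤
      ((Real.log (G.degree a) / 2 + Real.log (G.degree b) / 2 : ℝ) : EReal) := fun δ hδ =>
    upper G v₁ hF hne hab (hfull a h1 h3) (hfull b h2 h4) hδ
  have hlim := (alphaC1_anti G v₁).tendsto_nhdsGT (OrderTop.bddAbove _)
  set S := sSup ((fun d : ℝ => alphaC1 G v₁ d) '' Set.Ioi 0) with hSdef
  have hle : S ≤ ((Real.log (G.degree a) / 2 + Real.log (G.degree b) / 2 : ℝ) : EReal) := by
    apply sSup_le
    rintro _ ⟨δ, hδ, rfl⟩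
    exact hup δ hδ
  have hge : 0 ≤ S :=
    (alphaC1_nonneg G v₁ one_pos).trans (le_sSup ⟨1, by simp, rfl⟩)
  have htop : S ≠ ⊤ := ne_top_of_le_ne_top (EReal.coe_ne_top _) hle
  have hbot : S ≠ ⊥ := ne_bot_of_le_ne_bot EReal.zero_ne_bot hge
  refine ⟨S.toReal, ?_⟩
  rw [EReal.coe_toReal htop hbot]
  exact hlim

end Aux

/-- `α_c^1(δ) → ∞` as `δ → 0+` iff `G` is a `3`-vertex connected
graph or a star-shaped graph; otherwise the limit is finite. -/
theorem orrw_cover_exponent_at_zero {V : Type} [Fintype V] [DecidableEq V]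
    (G : SimpleGraph V) [DecidableRel G.Adj] (hG : G.Connected)
    (hV : 3 ≤ Fintype.card V) (v₁ : V) :
    ((Fintype.card V = 3 ∨
        (∃ c : V, (∀ v : V, v ≠ c → G.Adj c v) ∧
          ∀ u v : V, G.Adj u v → u = c ∨ v = c)) →
      Tendsto (fun d : ℝ => alphaC1 G v₁ d) (nhdsWithin 0 (Set.Ioi 0))
        (nhds (⊤ : EReal))) ∧
    (¬ (Fintype.card V = 3 ∨
        (∃ c : V, (∀ v : V, v ≠ c → G.Adj c v) ∧
          ∀ u v : V, G.Adj u v → u = c ∨ v = c)) →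
      ∃ L : ℝ, Tendsto (fun d : ℝ => alphaC1 G v₁ d) (nhdsWithin 0 (Set.Ioi 0))
        (nhds ((L : ℝ) : EReal))) := by
  refine ⟨?_, part_two G hG hV v₁⟩
  intro h
  apply part_one G v₁
  intro a b u v hab huv
  rcases h with h | ⟨c, -, hc⟩
  · by_contra hcon
    push Not at hcon
    obtain ⟨h1, h2, h3, h4⟩ := hcon
    have hcard : ({a, b, u, v} : Finset V).card = 4 := by
      have := hab.ne
      have := huv.ne
      grind
    have := Finset.card_le_univ ({a, b, u, v} : Finset V)
    omega
  · have e1 := hc a b hab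
    have e2 := hc u v huv
    grind

end ORRW
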